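/- Let ν be an ergodic σ-invariant Borel probability measure on Σ with λ(ν) < 0, and let μ be the Borel probability measure invariant for (T₀,T₁,ν). Then for every x ∈ ℝ₊ and every continuous function f : ℝ̄₊ → ℝ, the weighted sphere averages satisfy Σ_{ω ∈ Σ_n} ν(C_ω)·f(T_ω(x)) → ∫ f dμ as n → ∞, where Σ_n is the set of 0-1 words of length n and C_ω = {ω̄ ∈ Σ : ω̄_i = ω_i for i = 0,…,n−1}. -/

import Mathlib

/-!
The sphere average is `∫ f (T_{ω₀…ω_{n-1}} x) dν(ω)` (`sum_cylinder_eq_integral`), while invariance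
of `κ` under the skew product gives `∫ f dμ = ∫ f (T_{ω₀…ω_{n-1}} y) dκ(ω, y)` for every `n`. The two
integrands are compared `κ`-almost everywhere: the fibre maps are affine with slope `exp (S_n φ)`,
where `S_n φ` is the Birkhoff sum of the logarithmic slope `φ` (`skewMap_iterate_affine`), and
`∫ φ dν = λ(ν) < 0`. Von Neumann's mean ergodic theorem yields `S_n φ / n → λ(ν)` in measure
(`tendstoInMeasure_birkhoffAverage`), so that along a subsequence of any given sequence the slopes
tend to `0` almost surely. As `x` and `κ`-almost every `y` are finite, the two orbits become
arbitrarily close, continuity of `f` on the compact space `[0, ∞]` makes the difference of its values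
tend to `0` (`tendsto_sub_zero_of_close`), and dominated convergence concludes.
-/

open MeasureTheory Filter
open scoped ENNReal

/-- The generators `T₀(x) = a·x`, `T₁(x) = b·x + 1`, extended to the one-point
compactification `ℝ̄₊ = [0,∞]` (modelled by `ℝ≥0∞`) by `T₀(∞) = T₁(∞) = ∞`. -/
noncomputable def Tmap (a b : ℝ) (i : Bool) (x : ℝ≥0∞) : ℝ≥0∞ :=
  if i then ENNReal.ofReal b * x + 1 else ENNReal.ofReal a * x

/-- The one-sided full shift `σ` on `Σ = {0,1}^{ℕ₀}`. -/
def shiftMap (ω : ℕ → Bool) : ℕ → Bool := fun i => ω (i + 1)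

/-- The skew product `τ(ω̄, x) = (σ(ω̄), T_{ω̄₀}(x))` on `X = Σ × ℝ̄₊`. -/
noncomputable def skewMap (a b : ℝ) (z : (ℕ → Bool) × ℝ≥0∞) : (ℕ → Bool) × ℝ≥0∞ :=
  (shiftMap z.1, Tmap a b (z.1 0) z.2)

/-- A Borel probability measure `μ` on `ℝ̄₊` with `μ({∞}) = 0` is *invariant for*
`(T₀, T₁, ν)` if there is a `τ`-invariant Borel probability measure `κ` on `Σ × ℝ̄₊`
whose marginal on `Σ` is `ν` and whose marginal on `ℝ̄₊` is `μ`. -/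
def IsInvariantFor (a b : ℝ) (ν : Measure (ℕ → Bool)) (μ : Measure ℝ≥0∞) : Prop :=
  IsProbabilityMeasure μ ∧ μ {⊤} = 0 ∧
    ∃ κ : Measure ((ℕ → Bool) × ℝ≥0∞), IsProbabilityMeasure κ ∧
      MeasurePreserving (skewMap a b) κ κ ∧
      κ.map Prod.fst = ν ∧ κ.map Prod.snd = μ

/-- The Lyapunov exponent `λ(ν) = ν(C₀)·ln a + ν(C₁)·ln b` of a shift-invariant
measure `ν` on `Σ`, where `Cᵢ = {ω̄ : ω̄₀ = i}`. -/
noncomputable def lyap (a b : ℝ) (ν : Measure (ℕ → Bool)) : ℝ :=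
  (ν {ω | ω 0 = false}).toReal * Real.log a + (ν {ω | ω 0 = true}).toReal * Real.log b

/-! ### The logarithmic slope -/

/-- The logarithm of the slope of `T_{ω₀}`; its Birkhoff sums are the logarithms of the slopes of
the compositions `T_{ω_{n-1}} ∘ ⋯ ∘ T_{ω₀}`. -/
noncomputable def logSlope (a b : ℝ) (ω : ℕ → Bool) : ℝ :=
  if ω 0 then Real.log b else Real.log a

lemma measurable_logSlope (a b : ℝ) : Measurable (logSlope a b) :=
  (measurable_of_countable (fun i : Bool => if i then Real.log b else Real.log a)).comp
    (measurable_pi_apply 0)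

lemma memLp_logSlope (a b : ℝ) (ν : Measure (ℕ → Bool)) [IsProbabilityMeasure ν] :
    MemLp (logSlope a b) 2 ν := by
  refine MemLp.of_bound (measurable_logSlope a b).aestronglyMeasurable
    (|Real.log a| + |Real.log b|) (Eventually.of_forall fun ω => ?_)
  unfold logSlope
  split_ifs <;> simp

lemma integral_logSlope (a b : ℝ) (ν : Measure (ℕ → Bool)) [IsProbabilityMeasure ν] :
    ∫ ω, logSlope a b ω ∂ν = lyap a b ν := by
  have hm : Measurable fun ω : ℕ → Bool => ω 0 := measurable_pi_apply 0
  have h : ∫ i, (if i then Real.log b else Real.log a) ∂(ν.map fun ω : ℕ → Bool => ω 0)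
      = ∫ ω, logSlope a b ω ∂ν :=
    integral_map hm.aemeasurable (measurable_of_countable _).aestronglyMeasurable
  have : IsProbabilityMeasure (ν.map fun ω : ℕ → Bool => ω 0) :=
    Measure.isProbabilityMeasure_map hm.aemeasurable
  rw [← h, integral_fintype .of_finite]
  simp only [Fintype.sum_bool, Measure.real, lyap,
    Measure.map_apply hm (measurableSet_singleton _)]
  simp [Set.preimage, add_comm]

/-! ### The mean ergodic theorem in measure -/

section MeanErgodic

variable {α : Type*} [MeasurableSpace α] {ν : Measure α} {T : α → α} {φ : α → ℝ}

lemma iterate_compMeasurePreserving_ae (hT : MeasurePreserving T ν ν) (hφ : MemLp φ 2 ν) (n : ℕ) :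
    ((Lp.compMeasurePreserving T hT)^[n] hφ.toLp : α → ℝ) =ᵐ[ν] φ ∘ T^[n] := by
  rw [Lp.compMeasurePreserving_iterate]
  exact (Lp.coeFn_compMeasurePreserving _ (hT.iterate n)).trans
    ((hT.iterate n).quasiMeasurePreserving.ae_eq_comp hφ.coeFn_toLp)

lemma birkhoffAverage_compMeasurePreserving_ae (hT : MeasurePreserving T ν ν) (hφ : MemLp φ 2 ν)
    (n : ℕ) :
    ((birkhoffAverage ℝ (Lp.compMeasurePreserving T hT) id n hφ.toLp : Lp ℝ 2 ν) : α → ℝ)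
      =ᵐ[ν] birkhoffAverage ℝ T φ n := by
  have hsum : ((birkhoffSum (Lp.compMeasurePreserving T hT) id n hφ.toLp : Lp ℝ 2 ν) : α → ℝ)
      =ᵐ[ν] birkhoffSum T φ n := by
    induction n with
    | zero => simpa using Lp.coeFn_zero ℝ 2 ν
    | succ n ih =>
      rw [birkhoffSum_succ]
      filter_upwards [Lp.coeFn_add
          (birkhoffSum (Lp.compMeasurePreserving T hT) id n hφ.toLp)
          ((Lp.compMeasurePreserving T hT)^[n] hφ.toLp), ih,
        iterate_compMeasurePreserving_ae hT hφ n] with z h1 h2 h3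
      simp only [id, birkhoffSum_succ] at h1 ⊢
      rw [h1, Pi.add_apply, h2, h3, Function.comp]
  unfold birkhoffAverage
  filter_upwards [Lp.coeFn_smul ((n : ℝ)⁻¹)
    (birkhoffSum (Lp.compMeasurePreserving T hT) id n hφ.toLp), hsum] with z h1 h2
  rw [h1, Pi.smul_apply, h2]

/-- Mean ergodic theorem for an ergodic map: the fixed vectors of the Koopman operator are the
constants, so von Neumann's theorem gives convergence of Birkhoff averages to the mean in `L²`,
hence in measure. -/
theorem tendstoInMeasure_birkhoffAverage [IsProbabilityMeasure ν] (hT : Ergodic T ν)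
    (hφ : MemLp φ 2 ν) :
    TendstoInMeasure ν (birkhoffAverage ℝ T φ) atTop (fun _ => ∫ z, φ z ∂ν) := by
  have hTp := hT.toMeasurePreserving
  let U : Lp ℝ 2 ν →L[ℝ] Lp ℝ 2 ν :=
    (Lp.compMeasurePreservingₗᵢ ℝ T hTp).toContinuousLinearMap
  let g : Lp ℝ 2 ν := hφ.toLp
  let K := U.eqLocus (1 : Lp ℝ 2 ν →L[ℝ] Lp ℝ 2 ν)
  have hlim := U.tendsto_birkhoffAverage_orthogonalProjection
    (LinearIsometry.norm_toContinuousLinearMap_le _) g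
  set p : K := K.orthogonalProjectionOnto g with hp
  have hpfix : Lp.compMeasurePreserving T hTp (p : Lp ℝ 2 ν) = p := p.2
  obtain ⟨c, hc⟩ : ∃ c : ℝ, (p : Lp ℝ 2 ν) =ᵐ[ν] Function.const α c := by
    refine hT.ae_eq_const_of_ae_eq_comp_ae (Lp.aestronglyMeasurable _) ?_
    have h := Lp.coeFn_compMeasurePreserving (p : Lp ℝ 2 ν) hTp
    rw [hpfix] at h
    exact h.symm
  -- The constant `c` is the mean, since the projection preserves the inner product with `1 ∈ K`.
  have hcint : c = ∫ z, φ z ∂ν := by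
    let e : Lp ℝ 2 ν := (memLp_const (1 : ℝ)).toLp
    have hecoe : (e : α → ℝ) =ᵐ[ν] fun _ => 1 := MemLp.coeFn_toLp _
    have heK : e ∈ K := by
      change Lp.compMeasurePreserving T hTp e = e
      rw [Lp.toLp_compMeasurePreserving]
      rfl
    have hinner : inner ℝ e (p : Lp ℝ 2 ν) = inner ℝ e g :=
      K.inner_orthogonalProjectionOnto_eq_of_mem_left ⟨e, heK⟩ g
    rw [L2.inner_def, L2.inner_def] at hinner
    have h1 : ∫ z, inner ℝ (e z) ((p : Lp ℝ 2 ν) z) ∂ν = c := by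
      rw [integral_congr_ae (g := fun _ => c)]
      · simp
      · filter_upwards [hecoe, hc] with z h1 h2
        simp [h1, h2]
    have h2 : ∫ z, inner ℝ (e z) (g z) ∂ν = ∫ z, φ z ∂ν := by
      refine integral_congr_ae ?_
      filter_upwards [hecoe, hφ.coeFn_toLp] with z h1 h2
      simp [h1, g, h2]
    rw [← h1, hinner, h2]
  have hmeas := tendstoInMeasure_of_tendsto_Lp hlim
  refine (hmeas.congr_left fun n => ?_).congr_right ?_
  · exact birkhoffAverage_compMeasurePreserving_ae hTp hφ n
  · rw [← hcint]; exact hc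

end MeanErgodic

/-! ### Fibre iterates of the skew product -/

lemma skewMap_iterate_fst (a b : ℝ) (n : ℕ) (z : (ℕ → Bool) × ℝ≥0∞) :
    ((skewMap a b)^[n] z).1 = shiftMap^[n] z.1 := by
  induction n with
  | zero => rfl
  | succ n ih => rw [Function.iterate_succ_apply', Function.iterate_succ_apply', ← ih]; rfl

lemma shiftMap_iterate_zero (n : ℕ) (ω : ℕ → Bool) : (shiftMap^[n] ω) 0 = ω n := by
  have h : ∀ i, (shiftMap^[n] ω) i = ω (i + n) := by
    induction n with
    | zero => simp
    | succ n ih => intro i; rw [Function.iterate_succ_apply', shiftMap, ih]; congr 1; ring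
  simpa using h 0

lemma skewMap_iterate_succ_snd (a b : ℝ) (n : ℕ) (z : (ℕ → Bool) × ℝ≥0∞) :
    ((skewMap a b)^[n + 1] z).2 = Tmap a b (z.1 n) ((skewMap a b)^[n] z).2 := by
  rw [Function.iterate_succ_apply', skewMap, skewMap_iterate_fst, shiftMap_iterate_zero]

lemma foldl_ofFn_eq_skewMap_iterate (a b : ℝ) (n : ℕ) (ω : ℕ → Bool) (x : ℝ≥0∞) :
    (List.ofFn fun i : Fin n => ω i).foldl (fun z j => Tmap a b j z) x
      = ((skewMap a b)^[n] (ω, x)).2 := by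
  induction n with
  | zero => simp
  | succ n ih =>
    rw [List.ofFn_succ_last, List.foldl_append, skewMap_iterate_succ_snd]
    simpa using congrArg (Tmap a b (ω n)) ih

/-- Each fibre map is affine, with slope the exponential of the Birkhoff sum of `logSlope`. -/
lemma skewMap_iterate_affine {a b : ℝ} (ha : 0 < a) (hb : 0 < b) (n : ℕ) (ω : ℕ → Bool)
    (x : ℝ≥0∞) :
    ((skewMap a b)^[n] (ω, x)).2 =
      ENNReal.ofReal (Real.exp (birkhoffSum shiftMap (logSlope a b) n ω)) * x
        + ((skewMap a b)^[n] (ω, 0)).2 := by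
  induction n with
  | zero => simp
  | succ n ih =>
    rw [skewMap_iterate_succ_snd, skewMap_iterate_succ_snd, ih, birkhoffSum_succ, Real.exp_add,
      ENNReal.ofReal_mul (Real.exp_pos _).le]
    simp only [logSlope, shiftMap_iterate_zero, Tmap]
    split_ifs
    · rw [Real.exp_log hb]; ring
    · rw [Real.exp_log ha]; ring

/-! ### Comparison of orbits -/

/-- A uniform-continuity statement on the compactification `[0, ∞]`: along every ultrafilter the two
sequences have the same limit, which may be `∞`. -/
lemma tendsto_sub_zero_of_close {f : ℝ≥0∞ → ℝ} (hf : Continuous f) {u v d : ℕ → ℝ≥0∞}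
    (huv : ∀ n, u n ≤ v n + d n) (hvu : ∀ n, v n ≤ u n + d n) (hd : Tendsto d atTop (nhds 0)) :
    Tendsto (fun n => f (u n) - f (v n)) atTop (nhds 0) := by
  rw [tendsto_iff_ultrafilter]
  intro F hF
  obtain ⟨p, -, hp⟩ := isCompact_univ.ultrafilter_le_nhds (F.map u) (by simp)
  obtain ⟨q, -, hq⟩ := isCompact_univ.ultrafilter_le_nhds (F.map v) (by simp)
  have hp' : Tendsto u F (nhds p) := hp
  have hq' : Tendsto v F (nhds q) := hq
  have hd' : Tendsto d F (nhds 0) := hd.mono_left hF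
  have h1 : p ≤ q := by
    simpa using le_of_tendsto_of_tendsto' hp' (hq'.add hd') huv
  have h2 : q ≤ p := by
    simpa using le_of_tendsto_of_tendsto' hq' (hp'.add hd') hvu
  obtain rfl := le_antisymm h1 h2
  simpa using ((hf.tendsto p).comp hp').sub ((hf.tendsto p).comp hq')

/-- The weighted sphere average is the `ν`-integral of `f` along the `n`-th fibre iterate. -/
lemma sum_cylinder_eq_integral (a b : ℝ) (ν : Measure (ℕ → Bool)) [IsProbabilityMeasure ν]
    (x : ℝ≥0∞) (f : ℝ≥0∞ → ℝ) (n : ℕ) :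
    ∑ ω : Fin n → Bool,
        (ν {ωb : ℕ → Bool | ∀ i : Fin n, ωb ↑i = ω i}).toReal *
          f ((List.ofFn ω).foldl (fun z j => Tmap a b j z) x)
      = ∫ ω, f ((skewMap a b)^[n] (ω, x)).2 ∂ν := by
  let r : (ℕ → Bool) → (Fin n → Bool) := fun ω i => ω i
  have hr : Measurable r := measurable_pi_lambda _ fun i => measurable_pi_apply _
  have : IsProbabilityMeasure (ν.map r) := Measure.isProbabilityMeasure_map hr.aemeasurable
  have h := integral_map (μ := ν) hr.aemeasurable
    (f := fun w : Fin n → Bool => f ((List.ofFn w).foldl (fun z j => Tmap a b j z) x))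
    (measurable_of_countable _).aestronglyMeasurable
  simp only [r, foldl_ofFn_eq_skewMap_iterate] at h
  rw [← h, integral_fintype .of_finite]
  refine Finset.sum_congr rfl fun w _ => ?_
  rw [Measure.real, Measure.map_apply hr (measurableSet_singleton _), smul_eq_mul]
  congr 3
  ext ω
  simp [r, funext_iff]

/-- Along a sequence of times on which the Birkhoff averages tend to a negative limit, the
exponentials of the Birkhoff sums tend to `0`. -/
lemma tendsto_exp_birkhoffSum {φ : (ℕ → Bool) → ℝ} {ω : ℕ → Bool} {l : ℝ} (hl : l < 0) {k : ℕ → ℕ}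
    (hk : Tendsto k atTop atTop)
    (h : Tendsto (fun n => birkhoffAverage ℝ shiftMap φ (k n) ω) atTop (nhds l)) :
    Tendsto (fun n => ENNReal.ofReal (Real.exp (birkhoffSum shiftMap φ (k n) ω))) atTop
      (nhds 0) := by
  have hS : Tendsto (fun n => birkhoffSum shiftMap φ (k n) ω) atTop atBot := by
    refine ((tendsto_natCast_atTop_atTop.comp hk).atTop_mul_neg hl h).congr fun n => ?_
    rcases Nat.eq_zero_or_pos (k n) with h0 | h0
    · simp [h0]
    · have : (k n : ℝ) ≠ 0 := by positivity
      simp [birkhoffAverage, this]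
  simpa using ENNReal.tendsto_ofReal (Real.tendsto_exp_atBot.comp hS)

/-! ### Convergence of the sphere averages -/

/-- **Theorem E / Theorem 4.2 (weighted sphere averages).** Let `ν` be ergodic
`σ`-invariant with `λ(ν) < 0` and let `μ` be the measure invariant for `(T₀, T₁, ν)`.
Then for every `x ∈ ℝ₊` and every continuous `f : ℝ̄₊ → ℝ`,
`Σ_{ω ∈ Σ_n} ν(C_ω)·f(T_ω(x)) → ∫ f dμ`, where `C_ω` is the cylinder over the word
`ω` (modelled by `ω : Fin n → Bool`). -/
theorem weighted_sphere_averages (a b : ℝ) (ha : 0 < a) (ha1 : a < 1) (hb : 1 < b)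
    (ν : Measure (ℕ → Bool)) [IsProbabilityMeasure ν] (hν : Ergodic shiftMap ν)
    (hlyap : lyap a b ν < 0)
    (μ : Measure ℝ≥0∞) (hμ : IsInvariantFor a b ν μ)
    (x : ℝ≥0∞) (hx : x ≠ ⊤) (f : ℝ≥0∞ → ℝ) (hf : Continuous f) :
    Tendsto (fun n : ℕ => ∑ ω : Fin n → Bool,
        (ν {ωb : ℕ → Bool | ∀ i : Fin n, ωb ↑i = ω i}).toReal *
          f ((List.ofFn ω).foldl (fun z j => Tmap a b j z) x))
      atTop (nhds (∫ y, f y ∂μ)) := by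
  obtain ⟨_, hμtop, κ, hκ, hinv, rfl, rfl⟩ := hμ
  have hb0 : 0 < b := by linarith
  have hτ : ∀ n, Measurable ((skewMap a b)^[n]) := fun n => hinv.measurable.iterate n
  have hpair : Measurable fun z : (ℕ → Bool) × ℝ≥0∞ => (z.1, x) := by fun_prop
  have hfm : Measurable f := hf.measurable
  obtain ⟨C, hC⟩ : ∃ C, ∀ y, ‖f y‖ ≤ C := by
    obtain ⟨C, hC⟩ := isCompact_univ.exists_bound_of_continuousOn hf.continuousOn
    exact ⟨C, fun y => hC y trivial⟩
  have hmx : ∀ n, Measurable fun z : (ℕ → Bool) × ℝ≥0∞ => f ((skewMap a b)^[n] (z.1, x)).2 :=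
    fun n => hfm.comp (measurable_snd.comp ((hτ n).comp hpair))
  have hmy : ∀ n, Measurable fun z : (ℕ → Bool) × ℝ≥0∞ => f ((skewMap a b)^[n] z).2 :=
    fun n => hfm.comp (measurable_snd.comp (hτ n))
  have hix : ∀ n, Integrable (fun z => f ((skewMap a b)^[n] (z.1, x)).2) κ := fun n =>
    .of_bound (hmx n).aestronglyMeasurable C (.of_forall fun z => hC _)
  have hiy : ∀ n, Integrable (fun z => f ((skewMap a b)^[n] z).2) κ := fun n =>
    .of_bound (hmy n).aestronglyMeasurable C (.of_forall fun z => hC _)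
  have hsum : ∀ n, ∫ ω, f ((skewMap a b)^[n] (ω, x)).2 ∂(κ.map Prod.fst)
      = ∫ z, f ((skewMap a b)^[n] (z.1, x)).2 ∂κ := fun n =>
    integral_map measurable_fst.aemeasurable
      (hfm.comp (measurable_snd.comp ((hτ n).comp
        (measurable_id.prodMk measurable_const)))).aestronglyMeasurable
  have hlimit : ∀ n, ∫ y, f y ∂(κ.map Prod.snd) = ∫ z, f ((skewMap a b)^[n] z).2 ∂κ := by
    intro n
    rw [integral_map measurable_snd.aemeasurable hfm.aestronglyMeasurable]
    conv_lhs => rw [← (hinv.iterate n).map_eq]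
    exact integral_map (hτ n).aemeasurable (hfm.comp measurable_snd).aestronglyMeasurable
  have hfin : ∀ᵐ z ∂κ, z.2 ≠ ⊤ :=
    ae_of_ae_map (p := fun y => y ≠ ⊤) measurable_snd.aemeasurable (by simpa [ae_iff] using hμtop)
  have herg := tendstoInMeasure_birkhoffAverage hν (memLp_logSlope a b (κ.map Prod.fst))
  rw [integral_logSlope] at herg
  simp only [sum_cylinder_eq_integral, hsum]
  -- Only convergence in measure of the averages is available, so argue along subsequences.
  refine tendsto_of_subseq_tendsto fun ns hns => ?_
  obtain ⟨ms, hms, hae⟩ := (herg.comp hns).exists_seq_tendsto_ae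
  refine ⟨ms, ?_⟩
  have hk : Tendsto (fun n => ns (ms n)) atTop atTop := hns.comp hms.tendsto_atTop
  have hdiff : Tendsto (fun n => ∫ z, (f ((skewMap a b)^[ns (ms n)] (z.1, x)).2
      - f ((skewMap a b)^[ns (ms n)] z).2) ∂κ) atTop (nhds (∫ _, (0 : ℝ) ∂κ)) := by
    refine tendsto_integral_of_dominated_convergence (fun _ => C + C)
      (fun n => ((hmx _).sub (hmy _)).aestronglyMeasurable) (integrable_const _)
      (fun n => .of_forall fun z => (norm_sub_le _ _).trans (add_le_add (hC _) (hC _))) ?_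
    filter_upwards [hfin, ae_of_ae_map measurable_fst.aemeasurable hae] with z hz hzl
    have hslope := tendsto_exp_birkhoffSum hlyap hk hzl
    refine tendsto_sub_zero_of_close hf
      (d := fun n => ENNReal.ofReal
        (Real.exp (birkhoffSum shiftMap (logSlope a b) (ns (ms n)) z.1)) * (x + z.2)) ?_ ?_ ?_
    · intro n
      rw [skewMap_iterate_affine ha hb0 _ _ x, show z = (z.1, z.2) from rfl,
        skewMap_iterate_affine ha hb0 _ _ z.2, mul_add, add_comm, add_assoc]
      exact le_add_left (add_le_add le_rfl le_self_add)
    · intro n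
      rw [skewMap_iterate_affine ha hb0 _ _ x, show z = (z.1, z.2) from rfl,
        skewMap_iterate_affine ha hb0 _ _ z.2, mul_add, add_comm, add_assoc]
      exact le_add_left (add_le_add le_rfl le_add_self)
    · simpa using ENNReal.Tendsto.mul_const hslope (Or.inr (ENNReal.add_ne_top.2 ⟨hx, hz⟩))
  rw [integral_zero] at hdiff
  have := hdiff.add_const (∫ y, f y ∂(κ.map Prod.snd))
  rw [zero_add] at this
  refine this.congr fun n => ?_
  rw [integral_sub (hix _) (hiy _), ← hlimit, sub_add_cancel]
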